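/- For an empirical measure μ = (1/n)∑ᵢ δ_{xᵢ} on a compact set X and ν = (1/m)∑ⱼ δ_{yⱼ} on a compact set Y, with continuous cost c, the optimal transport cost satisfies OT_c(μ,ν) = max over φ ∈ ℝᵐ of (1/n)∑ᵢ min_j (c(xᵢ,yⱼ) − φⱼ) + (1/m)∑ⱼ φⱼ, i.e. the semi-dual formulation holds with discrete measures. -/

import Mathlib

open Finset

/-- Admissible couplings of the uniform empirical measures `(1/n)∑δ_{xᵢ}` and
`(1/m)∑δ_{yⱼ}`, represented as `n × m` matrices. -/
def couplings (n m : ℕ) : Set (Matrix (Fin n) (Fin m) ℝ) :=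
  {π | (∀ i j, 0 ≤ π i j) ∧ (∀ i, ∑ j, π i j = 1 / n) ∧ (∀ j, ∑ i, π i j = 1 / m)}

/-- Discrete optimal transport cost between the two empirical measures. -/
noncomputable def OTdiscrete (n m : ℕ) (C : Fin n → Fin m → ℝ) : ℝ :=
  sInf ((fun π : Matrix (Fin n) (Fin m) ℝ => ∑ i, ∑ j, π i j * C i j) '' couplings n m)

/-- Semi-dual objective `(1/n)∑ᵢ min_j (c(xᵢ,yⱼ) − φⱼ) + (1/m)∑ⱼ φⱼ`. -/
noncomputable def semidual (n m : ℕ) [NeZero m] (C : Fin n → Fin m → ℝ)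
    (φ : Fin m → ℝ) : ℝ :=
  (1 / n) * (∑ i, Finset.univ.inf' Finset.univ_nonempty fun j => C i j - φ j)
    + (1 / m) * ∑ j, φ j

theorem aux_weak {n m : ℕ} [NeZero n] [NeZero m] (C : Fin n → Fin m → ℝ) (ψ : Fin m → ℝ)
    (π : Matrix (Fin n) (Fin m) ℝ) (hπ : π ∈ couplings n m) :
    semidual n m C ψ ≤ ∑ i, ∑ j, π i j * C i j := by
  obtain ⟨h0, hr, hcs⟩ := hπ
  unfold semidual
  have h1 : (1 / (n : ℝ)) * (∑ i, Finset.univ.inf' Finset.univ_nonempty fun j => C i j - ψ j)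
      ≤ ∑ i, ∑ j, π i j * (C i j - ψ j) := by
    rw [Finset.mul_sum]
    apply Finset.sum_le_sum
    intro i _
    rw [← hr i, Finset.sum_mul]
    apply Finset.sum_le_sum
    intro j _
    exact mul_le_mul_of_nonneg_left (Finset.inf'_le _ (Finset.mem_univ j)) (h0 i j)
  have h2 : (1 / (m : ℝ)) * ∑ j, ψ j = ∑ i, ∑ j, π i j * ψ j := by
    rw [Finset.sum_comm, Finset.mul_sum]
    apply Finset.sum_congr rfl
    intro j _
    rw [← hcs j, Finset.sum_mul]
  have h3 : ∑ i, ∑ j, π i j * (C i j - ψ j)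
      = ∑ i, ∑ j, π i j * C i j - ∑ i, ∑ j, π i j * ψ j := by
    simp only [mul_sub, Finset.sum_sub_distrib]
  linarith

theorem aux_prod_mem (n m : ℕ) [NeZero n] [NeZero m] :
    (fun _ _ => 1 / n * (1 / m) : Matrix (Fin n) (Fin m) ℝ) ∈ couplings n m := by
  have hn : (n : ℝ) ≠ 0 := by exact_mod_cast NeZero.ne n
  have hm : (m : ℝ) ≠ 0 := by exact_mod_cast NeZero.ne m
  refine ⟨fun i j => by positivity, fun i => ?_, fun j => ?_⟩
  · simp; field_simp
  · simp; field_simp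

theorem aux_weak' {n m : ℕ} [NeZero n] [NeZero m] (C : Fin n → Fin m → ℝ) (ψ : Fin m → ℝ) :
    semidual n m C ψ ≤ OTdiscrete n m C := by
  unfold OTdiscrete
  apply le_csInf
  · exact ⟨_, _, aux_prod_mem n m, rfl⟩
  · rintro _ ⟨π, hπ, rfl⟩
    exact aux_weak C ψ π hπ

theorem aux_OT_le {n m : ℕ} [NeZero n] [NeZero m] (C : Fin n → Fin m → ℝ)
    (π : Matrix (Fin n) (Fin m) ℝ) (hπ : π ∈ couplings n m) :
    OTdiscrete n m C ≤ ∑ i, ∑ j, π i j * C i j := by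
  apply csInf_le
  · refine ⟨semidual n m C 0, ?_⟩
    rintro _ ⟨π, hπ, rfl⟩
    exact aux_weak C 0 π hπ
  · exact ⟨π, hπ, rfl⟩

/-- marginals and cost of a plan -/
def auxL (n m : ℕ) (C : Fin n → Fin m → ℝ) :
    (Fin n × Fin m → ℝ) →ₗ[ℝ] (Fin n → ℝ) × (Fin m → ℝ) × ℝ where
  toFun p := (fun i => ∑ j, p (i, j), fun j => ∑ i, p (i, j), ∑ i, ∑ j, p (i, j) * C i j)
  map_add' p q := by
    ext <;> simp [Finset.sum_add_distrib, add_mul]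
  map_smul' r p := by
    ext <;> simp [Finset.mul_sum, mul_assoc]

theorem aux_f {n m : ℕ} (f : ((Fin n → ℝ) × (Fin m → ℝ) × ℝ) →L[ℝ] ℝ) :
    ∃ (α : Fin n → ℝ) (β : Fin m → ℝ) (γ : ℝ), ∀ a b t,
      f (a, b, t) = ∑ i, a i * α i + ∑ j, b j * β j + t * γ := by
  refine ⟨fun i => f (Pi.single i 1, 0, 0), fun j => f (0, Pi.single j 1, 0), f (0, 0, 1), ?_⟩
  intro a b t
  have h1 := LinearMap.pi_apply_eq_sum_univ
    (f.toLinearMap ∘ₗ LinearMap.inl ℝ (Fin n → ℝ) ((Fin m → ℝ) × ℝ)) a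
  have h2 := LinearMap.pi_apply_eq_sum_univ
    (f.toLinearMap ∘ₗ LinearMap.inr ℝ (Fin n → ℝ) ((Fin m → ℝ) × ℝ) ∘ₗ
      LinearMap.inl ℝ (Fin m → ℝ) ℝ) b
  have h3 : f (0, 0, t) = t * f (0, 0, 1) := by
    rw [← smul_eq_mul, ← map_smul]; simp
  have h4 : f (a, b, t) = f (a, 0, 0) + f (0, b, 0) + f (0, 0, t) := by
    rw [← map_add, ← map_add]; simp
  have e1 : ∀ i : Fin n, (fun j => if i = j then (1:ℝ) else 0) = Pi.single i 1 := by
    intro i; ext j; simp [Pi.single_apply, eq_comm]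
  have e2 : ∀ i : Fin m, (fun j => if i = j then (1:ℝ) else 0) = Pi.single i 1 := by
    intro i; ext j; simp [Pi.single_apply, eq_comm]
  simp [e1] at h1
  simp [e2] at h2
  have h1' : f (a, 0, 0) = ∑ x, a x * f (Pi.single x 1, 0, 0) := h1
  rw [h4, h1', h2, h3]

theorem aux_approx {n m : ℕ} [NeZero n] [NeZero m] (C : Fin n → Fin m → ℝ)
    (ε : ℝ) (hε : 0 < ε) : ∃ φ : Fin m → ℝ, OTdiscrete n m C - ε ≤ semidual n m C φ := by
  have hn : (0 : ℝ) < n := by exact_mod_cast Nat.pos_of_ne_zero (NeZero.ne n)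
  have hm : (0 : ℝ) < m := by exact_mod_cast Nat.pos_of_ne_zero (NeZero.ne m)
  set v := OTdiscrete n m C with hv
  set A := auxL n m C '' stdSimplex ℝ (Fin n × Fin m) with hA
  have hAc : Convex ℝ A := (convex_stdSimplex ℝ _).linear_image _
  have hAk : IsCompact A :=
    (isCompact_stdSimplex ℝ _).image (LinearMap.continuous_of_finiteDimensional _)
  have hnot : ((fun _ => 1 / n, fun _ => 1 / m, v - ε) : (Fin n → ℝ) × (Fin m → ℝ) × ℝ) ∉ A := by
    rintro ⟨p, hp, h⟩
    simp only [auxL, LinearMap.coe_mk, AddHom.coe_mk, Prod.mk.injEq] at h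
    obtain ⟨h1, h2, h3⟩ := h
    have := aux_OT_le C (fun i j => p (i, j))
      ⟨fun i j => hp.1 _, fun i => congrFun h1 i, fun j => congrFun h2 j⟩
    rw [h3] at this
    linarith
  obtain ⟨f, u, hu1, hu2⟩ := geometric_hahn_banach_point_closed hAc hAk.isClosed hnot
  obtain ⟨α, β, γ, hf⟩ := aux_f f
  rw [hf] at hu1
  have hγ : 0 < γ := by
    have hmem := aux_prod_mem n m
    have hle := aux_OT_le C _ hmem
    have := hu2 (fun _ => 1 / n, fun _ => 1 / m, ∑ i, ∑ j, (1 / n * (1 / m)) * C i j) (by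
      refine ⟨fun _ => 1 / n * (1 / m), ⟨fun _ => by positivity, ?_⟩, ?_⟩
      · simp; field_simp
      · simp only [auxL, LinearMap.coe_mk, AddHom.coe_mk, Prod.mk.injEq]
        exact ⟨funext hmem.2.1, funext hmem.2.2, trivial⟩)
    rw [hf] at this
    by_contra hneg
    push Not at hneg
    have h5 : (v - ε) ≤ ∑ i, ∑ j, (1 / n * (1 / m)) * C i j := by
      linarith
    have := mul_le_mul_of_nonpos_right h5 hneg
    linarith
  have hpt : ∀ i j, u < α i + β j + C i j * γ := by
    intro i j
    have := hu2 (Pi.single i 1, Pi.single j 1, C i j) (by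
      refine ⟨Pi.single (i, j) 1, single_mem_stdSimplex ℝ _, ?_⟩
      have key : ∀ a b, (Pi.single (i, j) 1 : Fin n × Fin m → ℝ) (a, b)
          = (if a = i then 1 else 0) * (if b = j then 1 else 0) := by
        intro a b
        by_cases h1 : a = i <;> by_cases h2 : b = j <;> simp [Pi.single_apply, h1, h2]
      simp only [auxL, LinearMap.coe_mk, AddHom.coe_mk, Prod.mk.injEq, key]
      refine ⟨?_, ?_, ?_⟩
      · ext a; simp [Pi.single_apply]
      · ext a; simp [Pi.single_apply]
      · simp)
    rw [hf] at this
    simpa [Pi.single_apply] using this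
  refine ⟨fun j => - β j / γ, ?_⟩
  unfold semidual
  have hi : ∀ i, (u - α i) / γ ≤
      Finset.univ.inf' Finset.univ_nonempty fun j => C i j - (- β j / γ) := by
    intro i
    apply Finset.le_inf'
    intro j _
    have := hpt i j
    rw [div_le_iff₀ hγ, sub_mul, div_mul_cancel₀ _ hγ.ne']
    linarith
  have hs : (1 / (n:ℝ)) * ∑ i, (u - α i) / γ ≤ (1 / n) * ∑ i : Fin n,
      Finset.univ.inf' Finset.univ_nonempty fun j => C i j - (- β j / γ) :=
    mul_le_mul_of_nonneg_left (Finset.sum_le_sum fun i _ => hi i) (by positivity)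
  refine le_trans ?_ (add_le_add_left hs _)
  rw [← Finset.sum_div, ← Finset.sum_div, Finset.sum_sub_distrib, Finset.sum_neg_distrib]
  rw [← Finset.mul_sum, ← Finset.mul_sum] at hu1
  simp only [Finset.sum_const, Finset.card_univ, Fintype.card_fin, nsmul_eq_mul]
  have : 1 / (n:ℝ) * ((n * u - ∑ i, α i) / γ) + 1 / m * (-(∑ j, β j) / γ)
      = (u - 1 / n * ∑ i, α i - 1 / m * ∑ j, β j) / γ := by
    field_simp
    ring
  rw [this, le_div_iff₀ hγ]
  linarith

theorem aux_shift {n m : ℕ} [NeZero n] [NeZero m] (C : Fin n → Fin m → ℝ)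
    (φ : Fin m → ℝ) (t : ℝ) : semidual n m C φ ≤ semidual n m C (fun j => φ j - t) := by
  have hn : (0 : ℝ) < n := by exact_mod_cast Nat.pos_of_ne_zero (NeZero.ne n)
  have hm : (0 : ℝ) < m := by exact_mod_cast Nat.pos_of_ne_zero (NeZero.ne m)
  unfold semidual
  have hs : (1 / (n:ℝ)) * ∑ i : Fin n,
      ((Finset.univ.inf' Finset.univ_nonempty fun j => C i j - φ j) + t) ≤
      (1 / n) * ∑ i : Fin n,
      Finset.univ.inf' Finset.univ_nonempty fun j => C i j - (φ j - t) := by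
    refine mul_le_mul_of_nonneg_left (Finset.sum_le_sum fun i _ => ?_) (by positivity)
    apply Finset.le_inf'
    intro j _
    have := Finset.inf'_le (fun j => C i j - φ j) (Finset.mem_univ j)
    linarith
  rw [Finset.sum_add_distrib, mul_add] at hs
  rw [Finset.sum_sub_distrib, mul_sub]
  simp only [Finset.sum_const, Finset.card_univ, Fintype.card_fin, nsmul_eq_mul] at hs ⊢
  have e1 : 1 / (n:ℝ) * (n * t) = t := by field_simp
  have e2 : 1 / (m:ℝ) * (m * t) = t := by field_simp
  linarith

theorem aux_cont {n m : ℕ} [NeZero n] [NeZero m] (C : Fin n → Fin m → ℝ) :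
    Continuous (semidual n m C) := by
  unfold semidual
  refine Continuous.add (continuous_const.mul (continuous_finsetSum _ fun i _ => ?_)) ?_
  · apply Continuous.finset_inf'_apply
    intro j _
    fun_prop
  · fun_prop

theorem aux_main {n m : ℕ} [NeZero n] [NeZero m] (C : Fin n → Fin m → ℝ) :
    ∃ φ : Fin m → ℝ, OTdiscrete n m C = semidual n m C φ := by
  have hn : (0 : ℝ) < n := by exact_mod_cast Nat.pos_of_ne_zero (NeZero.ne n)
  have hm : (0 : ℝ) < m := by exact_mod_cast Nat.pos_of_ne_zero (NeZero.ne m)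
  set v := OTdiscrete n m C with hv
  obtain ⟨M, hM⟩ : ∃ M, ∀ i j, C i j ≤ M := by
    obtain ⟨M, hM⟩ := (Set.finite_range fun p : Fin n × Fin m => C p.1 p.2).bddAbove
    exact ⟨M, fun i j => hM ⟨(i, j), rfl⟩⟩
  set B := m * (v - 1 - M) with hB
  have hbox : ∀ ε, 0 < ε → ε ≤ 1 → ∃ φ ∈ Set.Icc (fun _ : Fin m => B) 0,
      v - ε ≤ semidual n m C φ := by
    intro ε hε hε1
    obtain ⟨φ₀, h₀⟩ := aux_approx C ε hε
    obtain ⟨k, -, hk⟩ := Finset.exists_max_image Finset.univ φ₀ Finset.univ_nonempty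
    have h₁ := h₀.trans (aux_shift C φ₀ (φ₀ k))
    set φ : Fin m → ℝ := fun j => φ₀ j - φ₀ k with hφ
    have hφ0 : ∀ j, φ j ≤ 0 := fun j => sub_nonpos.2 (hk j (Finset.mem_univ j))
    have hφk : φ k = 0 := sub_self _
    refine ⟨φ, ⟨fun l => ?_, hφ0⟩, h₁⟩
    have h2 : (1 / (n:ℝ)) * (∑ i, Finset.univ.inf' Finset.univ_nonempty fun j => C i j - φ j)
        ≤ (1 / (n:ℝ)) * ∑ i : Fin n, M := by
      refine mul_le_mul_of_nonneg_left (Finset.sum_le_sum fun i _ => ?_) (by positivity)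
      have := Finset.inf'_le (fun j => C i j - φ j) (Finset.mem_univ k)
      have := hM i k
      linarith
    have e1 : (1 / (n:ℝ)) * ∑ i : Fin n, M = M := by
      simp; field_simp
    have h3 : ∑ j, φ j ≤ φ l := by
      rw [← Finset.add_sum_erase _ _ (Finset.mem_univ l)]
      have := Finset.sum_nonpos (s := Finset.univ.erase l) (f := φ) fun j _ => hφ0 j
      linarith
    have h4 : 1 / (m:ℝ) * ∑ j, φ j ≤ 1 / m * φ l :=
      mul_le_mul_of_nonneg_left h3 (by positivity)
    unfold semidual at h₁
    have h5 : v - 1 - M ≤ 1 / m * φ l := by linarith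
    have := mul_le_mul_of_nonneg_left h5 hm.le
    have e2 : (m:ℝ) * (1 / m * φ l) = φ l := by field_simp
    show m * (v - 1 - M) ≤ φ l
    linarith
  obtain ⟨φ₁, hφ₁, -⟩ := hbox 1 one_pos le_rfl
  obtain ⟨φ, hφ, hmax⟩ := (isCompact_Icc (a := fun _ : Fin m => B) (b := 0)).exists_isMaxOn
    ⟨φ₁, hφ₁⟩ (aux_cont C).continuousOn
  refine ⟨φ, le_antisymm ?_ (aux_weak' C φ)⟩
  apply le_of_forall_pos_le_add
  intro ε hε
  obtain ⟨ψ, hψ, h⟩ := hbox (min ε 1) (by positivity) (min_le_right _ _)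
  have h1 : semidual n m C ψ ≤ semidual n m C φ := hmax hψ
  have := min_le_left ε 1
  linarith

/-- Semi-dual (Kantorovich) formulation of discrete optimal transport: the
optimal transport cost equals the maximum of the semi-dual objective,
and the maximum is attained. -/
theorem semidual_formulation_discrete
    {d n m : ℕ} [NeZero n] [NeZero m]
    (X Y : Set (Fin d → ℝ)) (hX : IsCompact X) (hY : IsCompact Y)
    (x : Fin n → (Fin d → ℝ)) (hx : ∀ i, x i ∈ X)
    (y : Fin m → (Fin d → ℝ)) (hy : ∀ j, y j ∈ Y)
    (c : (Fin d → ℝ) → (Fin d → ℝ) → ℝ)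
    (hc : Continuous fun p : (Fin d → ℝ) × (Fin d → ℝ) => c p.1 p.2) :
    ∃ φ : Fin m → ℝ,
      OTdiscrete n m (fun i j => c (x i) (y j)) = semidual n m (fun i j => c (x i) (y j)) φ ∧
      ∀ ψ : Fin m → ℝ,
        semidual n m (fun i j => c (x i) (y j)) ψ ≤ OTdiscrete n m (fun i j => c (x i) (y j)) := by
  obtain ⟨φ, hφ⟩ := aux_main (n := n) (m := m) (fun i j => c (x i) (y j))
  exact ⟨φ, hφ, fun ψ => aux_weak' _ ψ⟩
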